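/- Fix ρ ∈ (0,1) and α ∈ (0,1). Let (α_n) be a sequence in (0,1) with n·α_n → α, let c_n be defined by Φ(−c_n) = α_n, and for n ≥ 2 let z₀(n) be the unique real number with Φ(−d(ρ, c_n, z₀(n))) = 1/n. Then c_n − d(ρ, c_n, z₀(n)) → 0 as n → ∞. -/

import Mathlib

open MeasureTheory Filter

/-- The standard normal density. -/
noncomputable def phi (x : ℝ) : ℝ := (Real.sqrt (2 * Real.pi))⁻¹ * Real.exp (-x ^ 2 / 2)

/-- The standard normal cumulative distribution function. -/
noncomputable def Phi (x : ℝ) : ℝ := ∫ t in Set.Iic x, phi t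

/-- d(ρ,c,z) = (c + √ρ·z)/√(1−ρ). -/
noncomputable def dd (ρ c z : ℝ) : ℝ := (c + Real.sqrt ρ * z) / Real.sqrt (1 - ρ)

/-- G(ρ,c,z) = (c + z/√ρ)/(2(1−ρ)^{3/2}). -/
noncomputable def G (ρ c z : ℝ) : ℝ :=
  (c + z / Real.sqrt ρ) / (2 * (1 - ρ) ^ ((3 : ℝ) / 2))

/-- H_n(ρ,c) = ∫ Φ(d(ρ,c,z))^n φ(z) dz. -/
noncomputable def Hn (n : ℕ) (ρ c : ℝ) : ℝ := ∫ z : ℝ, (Phi (dd ρ c z)) ^ n * phi z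

theorem phi_pos' (x : ℝ) : 0 < phi x := by
  unfold phi; positivity

theorem phi_int : Integrable phi := by
  have h := (integrable_exp_neg_mul_sq (b := 1/2) (by norm_num)).const_mul
    (Real.sqrt (2 * Real.pi))⁻¹
  refine h.congr (Eventually.of_forall fun x => ?_)
  simp only [phi]
  congr 2
  ring

theorem Phi_mono : Monotone Phi := by
  intro a b hab
  unfold Phi
  exact setIntegral_mono_set phi_int.integrableOn
    (Eventually.of_forall fun x => (phi_pos' x).le)
    (Set.Iic_subset_Iic.mpr hab).eventuallyLE

theorem Phi_pos (x : ℝ) : 0 < Phi x := by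
  unfold Phi
  rw [setIntegral_pos_iff_support_of_nonneg_ae
    (Eventually.of_forall fun x => (phi_pos' x).le) phi_int.integrableOn]
  have : Function.support phi = Set.univ := by
    ext y; simp [(phi_pos' y).ne']
  rw [this]
  simp

theorem Phi_shift (y ε : ℝ) (hε : 0 < ε) : Phi (y - ε) ≤ Real.exp (ε * y) * Phi y := by
  have h1 : Phi (y - ε) = ∫ t in Set.Iic y, phi (t - ε) := by
    unfold Phi
    have := (measurePreserving_sub_right volume ε).setIntegral_preimage_emb
      (measurableEmbedding_subRight ε) phi (Set.Iic (y - ε))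
    rw [← this]
    congr 2
    ext t; simp
  rw [h1]
  unfold Phi
  rw [← integral_const_mul]
  refine setIntegral_mono_on (phi_int.comp_sub_right ε).integrableOn
    (phi_int.const_mul _).integrableOn measurableSet_Iic fun t ht => ?_
  have ht : t ≤ y := ht
  unfold phi
  rw [mul_left_comm, ← Real.exp_add]
  gcongr
  nlinarith [mul_le_mul_of_nonneg_left ht hε.le, sq_nonneg ε]

theorem atTop_of_Phi {a : ℕ → ℝ} (h : Tendsto (fun n => Phi (-(a n))) atTop (nhds 0)) :
    Tendsto a atTop atTop := by
  rw [tendsto_atTop]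
  intro M
  filter_upwards [h.eventually_lt_const (Phi_pos (-M))] with n hn
  by_contra hlt
  exact absurd (Phi_mono (show -M ≤ -(a n) by linarith)) (not_le.mpr hn)

theorem half_bound {a b : ℕ → ℝ} {l : ℝ} (hl : 0 < l) (hb : Tendsto b atTop atTop)
    (h : Tendsto (fun n => Phi (-(a n)) / Phi (-(b n))) atTop (nhds l)) {ε : ℝ} (hε : 0 < ε) :
    ∀ᶠ n in atTop, a n - b n < ε := by
  have h2 : Tendsto (fun n => Real.exp (-(ε * b n))) atTop (nhds 0) :=
    Real.tendsto_exp_neg_atTop_nhds_zero.comp (hb.const_mul_atTop hε)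
  filter_upwards [h2.eventually_lt h hl] with n hn
  by_contra hge
  have h3 := Phi_mono (show -(a n) ≤ -(b n) - ε by linarith)
  have h4 := Phi_shift (-(b n)) ε hε
  rw [lt_div_iff₀ (Phi_pos _)] at hn
  rw [mul_neg] at h4
  linarith

theorem cn_sub_d_z0_tendsto_zero
    (ρ : ℝ) (hρ : ρ ∈ Set.Ioo (0:ℝ) 1) (α : ℝ) (hα : α ∈ Set.Ioo (0:ℝ) 1)
    (αseq : ℕ → ℝ) (hαseq : ∀ n, αseq n ∈ Set.Ioo (0:ℝ) 1)
    (hlim : Tendsto (fun n : ℕ => (n : ℝ) * αseq n) atTop (nhds α))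
    (c : ℕ → ℝ) (hc : ∀ n, Phi (-(c n)) = αseq n)
    (z₀ : ℕ → ℝ) (hz₀ : ∀ n : ℕ, 2 ≤ n → Phi (-(dd ρ (c n) (z₀ n))) = 1 / n) :
    Tendsto (fun n : ℕ => c n - dd ρ (c n) (z₀ n)) atTop (nhds 0) := by
  have hinv : Tendsto (fun n : ℕ => (1:ℝ) / n) atTop (nhds 0) := tendsto_one_div_atTop_nhds_zero_nat
  have hd : Tendsto (fun n => dd ρ (c n) (z₀ n)) atTop atTop := by
    apply atTop_of_Phi
    refine hinv.congr' ?_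
    filter_upwards [eventually_ge_atTop 2] with n hn
    exact (hz₀ n hn).symm
  have hct : Tendsto c atTop atTop := by
    apply atTop_of_Phi
    have := hlim.mul hinv
    rw [mul_zero] at this
    refine this.congr' ?_
    filter_upwards [eventually_ge_atTop 2] with n hn
    have : (n:ℝ) ≠ 0 := by positivity
    rw [hc]; field_simp
  have hr : Tendsto (fun n => Phi (-(c n)) / Phi (-(dd ρ (c n) (z₀ n)))) atTop (nhds α) := by
    refine hlim.congr' ?_
    filter_upwards [eventually_ge_atTop 2] with n hn
    have : (n:ℝ) ≠ 0 := by positivity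
    rw [hc, hz₀ n hn]; field_simp
  have hr' : Tendsto (fun n => Phi (-(dd ρ (c n) (z₀ n))) / Phi (-(c n))) atTop (nhds α⁻¹) := by
    refine (hr.inv₀ hα.1.ne').congr fun n => ?_
    rw [inv_div]
  rw [Metric.tendsto_nhds]
  intro ε hε
  filter_upwards [half_bound hα.1 hd hr hε, half_bound (inv_pos.mpr hα.1) hct hr' hε] with n h1 h2
  rw [Real.dist_eq, sub_zero, abs_lt]
  constructor <;> linarith
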